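/- arXiv:2206.04412 — 8 statements merged into one kernel-verified Lean document; each statement's English description precedes it below -/
import Mathlib

section
/- For any fixed ℓ > 0, the map (x, y) ↦ d_ℓ(x, y) is continuous on ℝ^n × ℝ^n. -/
open scoped RealInnerProductSpace

noncomputable abbrev E (n : ℕ) := EuclideanSpace ℝ (Fin n)

theorem aux_cont {P V : Type*} [TopologicalSpace P] [NormedAddCommGroup V] [NormedSpace ℝ V]
    [ProperSpace V] (φ : P → V → ℝ) (hφ : Continuous (fun q : P × V => φ q.1 q.2))
    (hc : ∀ p, ConvexOn ℝ Set.univ (φ p)) (d : P → V) (hd : ∀ p w, φ p (d p) ≤ φ p w)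
    (hu : ∀ p w, (∀ u, φ p w ≤ φ p u) → w = d p) : Continuous d := by
  rw [continuous_iff_continuousAt]
  intro p₀
  rw [ContinuousAt, Metric.tendsto_nhds]
  intro ε hε
  have h1 : ∀ z ∈ Metric.sphere (d p₀) (ε / 2), ∀ᶠ q : V × P in nhds z ×ˢ nhds p₀,
      φ q.2 (d p₀) < φ q.2 q.1 := by
    intro z hz
    rw [← nhds_prod_eq]
    have hlt : φ p₀ (d p₀) < φ p₀ z := by
      rcases (hd p₀ z).lt_or_eq with h | h
      · exact h
      · have := hu p₀ z (fun u => h ▸ hd p₀ u)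
        rw [this, mem_sphere_iff_norm, sub_self, norm_zero] at hz
        linarith
    have c1 : Continuous (fun q : V × P => φ q.2 (d p₀)) :=
      hφ.comp (continuous_snd.prodMk continuous_const)
    have c2 : Continuous (fun q : V × P => φ q.2 q.1) :=
      hφ.comp (continuous_snd.prodMk continuous_fst)
    exact (c1.tendsto (z, p₀)).eventually_lt (c2.tendsto (z, p₀)) hlt
  have h2 : ∀ᶠ p in nhds p₀, ∀ z ∈ Metric.sphere (d p₀) (ε / 2), φ p (d p₀) < φ p z := by
    apply (isCompact_sphere (d p₀) (ε / 2)).eventually_forall_of_forall_eventually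
    intro z hz
    have := h1 z hz
    rw [← nhds_prod_eq] at this
    exact (continuous_swap.tendsto (p₀, z)).eventually this
  filter_upwards [h2] with p hp
  by_contra hcon
  push Not at hcon
  rw [dist_eq_norm] at hcon
  set r := ‖d p - d p₀‖ with hr
  have hrpos : 0 < r := by linarith
  set t := ε / 2 / r with ht
  have ht0 : 0 ≤ t := by positivity
  have ht1 : t ≤ 1 := by rw [ht, div_le_one hrpos]; linarith
  have hz := hp ((1 - t) • d p₀ + t • d p) (by
    rw [mem_sphere_iff_norm]
    have : (1 - t) • d p₀ + t • d p - d p₀ = t • (d p - d p₀) := by module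
    rw [this, norm_smul, ← hr, Real.norm_of_nonneg ht0, ht]
    field_simp)
  have := (hc p).2 (Set.mem_univ (d p₀)) (Set.mem_univ (d p)) (sub_nonneg.2 ht1) ht0 (by ring)
  simp only [smul_eq_mul] at this
  nlinarith [hd p (d p₀), mul_nonneg ht0 (sub_nonneg.2 (hd p (d p₀)))]

theorem stmt_1
    (n m : ℕ) (hn : 1 ≤ n) (hm : 1 ≤ m)
    (f g F : Fin m → E n → ℝ)
    (L : Fin m → ℝ) (hL : ∀ i, 0 < L i)
    (hfc : ∀ i, ConvexOn ℝ Set.univ (f i))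
    (hfd : ∀ i, ContDiff ℝ 1 (f i))
    (hflip : ∀ i a b, ‖gradient (f i) a - gradient (f i) b‖ ≤ L i * ‖a - b‖)
    (hgc : ∀ i, ConvexOn ℝ Set.univ (g i))
    (hF : ∀ i w, F i w = f i w + g i w)
    (ℓ : ℝ) (hℓ : 0 < ℓ)
    (d : E n → E n → E n)
    (hd : ∀ a b w,
      (⨆ i, (⟪gradient (f i) b, d a b - b⟫ + g i (d a b) + f i b - F i a)) +
          ℓ / 2 * ‖d a b - b‖ ^ 2 ≤
        (⨆ i, (⟪gradient (f i) b, w - b⟫ + g i w + f i b - F i a)) +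
          ℓ / 2 * ‖w - b‖ ^ 2)
    (huniq : ∀ a b w,
      (∀ u, (⨆ i, (⟪gradient (f i) b, w - b⟫ + g i w + f i b - F i a)) +
          ℓ / 2 * ‖w - b‖ ^ 2 ≤
        (⨆ i, (⟪gradient (f i) b, u - b⟫ + g i u + f i b - F i a)) +
          ℓ / 2 * ‖u - b‖ ^ 2) → w = d a b) :
    Continuous (fun p : E n × E n => d p.1 p.2) := by
  haveI : Nonempty (Fin m) := ⟨⟨0, hm⟩⟩
  have hfcont : ∀ i, Continuous (f i) := fun i => (hfd i).continuous
  have hgcont : ∀ i, Continuous (g i) := fun i => by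
    have := (hgc i).continuousOn isOpen_univ
    rwa [← continuousOn_univ]
  have hgrad : ∀ i, Continuous (gradient (f i)) := fun i => by
    have : LipschitzWith (L i).toNNReal (gradient (f i)) := by
      apply LipschitzWith.of_dist_le_mul
      intro a b
      rw [dist_eq_norm, dist_eq_norm, Real.coe_toNNReal _ (hL i).le]
      exact hflip i a b
    exact this.continuous
  have hFcont : ∀ i, Continuous (F i) := fun i => by
    have : F i = fun w => f i w + g i w := funext (hF i)
    rw [this]
    exact (hfcont i).add (hgcont i)
  refine aux_cont (fun (p : E n × E n) (z : E n) =>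
    (⨆ i, (⟪gradient (f i) p.2, z - p.2⟫ + g i z + f i p.2 - F i p.1)) +
          ℓ / 2 * ‖z - p.2‖ ^ 2) ?_ ?_ (fun p => d p.1 p.2)
    (fun p w => hd p.1 p.2 w) (fun p w h => huniq p.1 p.2 w h)
  · refine Continuous.add ?_ (by fun_prop)
    simp only [← Finset.sup'_univ_eq_ciSup]
    refine Continuous.finset_sup'_apply _ (fun i _ => ?_)
    have h1 := hgcont i
    have h2 := hfcont i
    have h3 := hFcont i
    have h4 := hgrad i
    fun_prop
  · rintro ⟨a, b⟩
    refine ConvexOn.add ?_ ?_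
    · refine ⟨convex_univ, fun x _ y _ s t hs ht hst => ?_⟩
      simp only [smul_eq_mul]
      apply ciSup_le
      intro i
      have hx := le_ciSup (Set.finite_range (fun i =>
        ⟪gradient (f i) b, x - b⟫ + g i x + f i b - F i a)).bddAbove i
      have hy := le_ciSup (Set.finite_range (fun i =>
        ⟪gradient (f i) b, y - b⟫ + g i y + f i b - F i a)).bddAbove i
      have hg := (hgc i).2 (Set.mem_univ x) (Set.mem_univ y) hs ht hst
      have e : s • x + t • y - b = s • (x - b) + t • (y - b) := by
        obtain rfl : s = 1 - t := by linarith
        module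
      rw [e, inner_add_right, inner_smul_right, inner_smul_right]
      simp only [smul_eq_mul] at hg hx hy
      have hx' := mul_le_mul_of_nonneg_left hx hs
      have hy' := mul_le_mul_of_nonneg_left hy ht
      obtain rfl : s = 1 - t := by linarith
      linarith
    · have h1 : ConvexOn ℝ Set.univ (fun z : E n => ‖z - b‖) := by
        have := (convexOn_univ_norm (E := E n)).translate_left (-b)
        simpa [Function.comp_def, sub_eq_add_neg] using this
      have h2 := (h1.pow (fun _ _ => norm_nonneg _) 2).smul (half_pos hℓ).le
      simpa [smul_eq_mul] using h2
end

section
/- Let ℓ ≥ L. A point y ∈ ℝ^n is weakly Pareto optimal (i.e., there is no x ∈ ℝ^n with F_i(x) < F_i(y) for all i = 1,…,m) if and only if there exists x ∈ ℝ^n such that d_ℓ(x, y) = y. -/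
open scoped RealInnerProductSpace

theorem grad_ineq {n : ℕ} (f : E n → ℝ) (hc : ConvexOn ℝ Set.univ f) (hd : ContDiff ℝ 1 f)
    (y z : E n) : f y + ⟪gradient f y, z - y⟫ ≤ f z := by
  have hdiff : DifferentiableAt ℝ f y := (hd.differentiable (by norm_num)) y
  have h1 := hdiff.hasGradientAt.hasFDerivAt
  have hl : HasDerivAt (fun t : ℝ => AffineMap.lineMap y z t) (z - y) (0:ℝ) :=
    AffineMap.hasDerivAt_lineMap
  have h0 : (AffineMap.lineMap y z (0:ℝ) : E n) = y := by simp
  rw [← h0] at h1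
  have h2 := h1.comp_hasDerivAt (0:ℝ) hl
  have h3 : ConvexOn ℝ Set.univ (f ∘ (AffineMap.lineMap y z : ℝ →ᵃ[ℝ] E n)) := by
    simpa using hc.comp_affineMap (AffineMap.lineMap y z : ℝ →ᵃ[ℝ] E n)
  have h4 := h3.le_slope_of_hasDerivAt (Set.mem_univ 0) (Set.mem_univ 1) one_pos h2
  rw [InnerProductSpace.toDual_apply_apply, h0, slope_def_field] at h4
  simp only [Function.comp, AffineMap.lineMap_apply_one, h0, sub_zero, div_one] at h4
  linarith

theorem stmt_4
    (n m : ℕ) (hn : 1 ≤ n) (hm : 1 ≤ m)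
    (f g F : Fin m → E n → ℝ)
    (L : Fin m → ℝ) (hL : ∀ i, 0 < L i)
    (hfc : ∀ i, ConvexOn ℝ Set.univ (f i))
    (hfd : ∀ i, ContDiff ℝ 1 (f i))
    (hflip : ∀ i a b, ‖gradient (f i) a - gradient (f i) b‖ ≤ L i * ‖a - b‖)
    (hgc : ∀ i, ConvexOn ℝ Set.univ (g i))
    (hF : ∀ i w, F i w = f i w + g i w)
    (ℓ : ℝ) (hℓ : 0 < ℓ) (hℓL : ∀ i, L i ≤ ℓ)
    (d : E n → E n → E n)
    (hd : ∀ a b w,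
      (⨆ i, (⟪gradient (f i) b, d a b - b⟫ + g i (d a b) + f i b - F i a)) +
          ℓ / 2 * ‖d a b - b‖ ^ 2 ≤
        (⨆ i, (⟪gradient (f i) b, w - b⟫ + g i w + f i b - F i a)) +
          ℓ / 2 * ‖w - b‖ ^ 2)
    (y : E n) :
    (¬ ∃ x : E n, ∀ i, F i x < F i y) ↔ ∃ x : E n, d x y = y := by
  have : Nonempty (Fin m) := ⟨⟨0, hm⟩⟩
  constructor
  · intro hP
    refine ⟨y, ?_⟩
    by_contra hne
    apply hP
    have hr : 0 < ‖d y y - y‖ := norm_pos_iff.mpr (sub_ne_zero.mpr hne)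
    have h := hd y y y
    have hz : (⨆ i, (⟪gradient (f i) y, y - y⟫ + g i y + f i y - F i y)) = 0 := by
      have : ∀ i, (⟪gradient (f i) y, y - y⟫ + g i y + f i y - F i y) = 0 := by
        intro i; rw [hF]; simp; ring
      simp only [this]; simp
    rw [hz] at h
    generalize d y y = z at *
    refine ⟨y + (1/4 : ℝ) • (z - y), fun i => ?_⟩
    have hi := le_ciSup (f := fun i => (⟪gradient (f i) y, z - y⟫ + g i z + f i y - F i y))
      (Set.finite_range _).bddAbove i
    simp only [hF, sub_self, norm_zero] at hi h ⊢
    set w := y + (1/4 : ℝ) • (z - y) with hw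
    have hwy : w - y = (1/4 : ℝ) • (z - y) := by simp [hw]
    have hg : g i w ≤ (3/4) * g i y + (1/4) * g i z := by
      have := (hgc i).2 (Set.mem_univ y) (Set.mem_univ z)
        (show (0:ℝ) ≤ 3/4 by norm_num) (show (0:ℝ) ≤ 1/4 by norm_num) (by norm_num)
      have e : (3/4 : ℝ) • y + (1/4 : ℝ) • z = w := by rw [hw]; module
      rw [e] at this
      simpa using this
    have hf := grad_ineq (f i) (hfc i) (hfd i) w y
    have e2 : ⟪gradient (f i) w, y - w⟫ =
        - ⟪gradient (f i) w - gradient (f i) y, w - y⟫ - (1/4) * ⟪gradient (f i) y, z - y⟫ := by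
      rw [← neg_sub w y, inner_neg_right, inner_sub_left, hwy]
      simp only [inner_smul_right]; simp
    have e3 : ⟪gradient (f i) w - gradient (f i) y, w - y⟫ ≤ ℓ * (1/16 * ‖z - y‖^2) := by
      have hn' : ‖w - y‖ = 1/4 * ‖z - y‖ := by rw [hwy, norm_smul]; norm_num
      calc _ ≤ ‖gradient (f i) w - gradient (f i) y‖ * ‖w - y‖ := real_inner_le_norm _ _
        _ ≤ (ℓ * ‖w - y‖) * ‖w - y‖ := by
          gcongr
          exact (hflip i w y).trans (by gcongr; exact hℓL i)
        _ = _ := by rw [hn']; ring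
    have hp : 0 < ℓ * ‖z - y‖^2 := by positivity
    linarith
  · rintro ⟨x, hx⟩ ⟨z, hz⟩
    -- uniform gap
    obtain ⟨j, hj⟩ := Finite.exists_max (fun i => F i z - F i y)
    set δ := F j y - F j z with hδ
    have hδ0 : 0 < δ := sub_pos.mpr (hz j)
    set r := ‖z - y‖ ^ 2 with hr
    have hr0 : 0 ≤ r := by positivity
    have key : ∀ t : ℝ, 0 < t → t ≤ 1 → t * δ ≤ ℓ / 2 * (t ^ 2 * r) := by
      intro t ht ht1
      have h := hd x y (y + t • (z - y))
      rw [hx] at h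
      have hs : (⨆ i, (⟪gradient (f i) y, (y + t • (z - y)) - y⟫ + g i (y + t • (z - y))
          + f i y - F i x)) ≤ (⨆ i, (⟪gradient (f i) y, y - y⟫ + g i y + f i y - F i x)) - t * δ := by
        apply ciSup_le
        intro i
        have hi := le_ciSup (f := fun i => (⟪gradient (f i) y, y - y⟫ + g i y + f i y - F i x))
          (Set.finite_range _).bddAbove i
        have hg : g i (y + t • (z - y)) ≤ (1 - t) * g i y + t * g i z := by
          have := (hgc i).2 (Set.mem_univ y) (Set.mem_univ z)
            (show (0:ℝ) ≤ 1 - t by linarith) ht.le (by ring)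
          have e : (1 - t) • y + t • z = y + t • (z - y) := by module
          rw [e] at this
          simpa using this
        have hf := grad_ineq (f i) (hfc i) (hfd i) y z
        have hji := hj i
        simp only [hF, sub_self, inner_zero_right, add_sub_cancel_left, inner_smul_right] at *
        have : t * (f i y + ⟪gradient (f i) y, z - y⟫ + g i z - f i y - g i y) ≤ t * (-δ) := by
          apply mul_le_mul_of_nonneg_left _ ht.le
          linarith
        linarith
      have e : ‖y + t • (z - y) - y‖ ^ 2 = t ^ 2 * r := by
        rw [add_sub_cancel_left, norm_smul, mul_pow, Real.norm_eq_abs, sq_abs]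
      rw [e] at h
      simp only [sub_self, norm_zero] at h hs
      linarith
    have hden : 0 < ℓ * r + δ := by positivity
    have h := key (δ / (ℓ * r + δ)) (by positivity) (by
      rw [div_le_one hden]; nlinarith)
    set t := δ / (ℓ * r + δ) with ht
    have ht0 : 0 < t := by positivity
    have htt : t * (ℓ * r + δ) = δ := by rw [ht]; field_simp
    have h5 : δ ≤ ℓ / 2 * (t * r) := by
      by_contra hcon
      push Not at hcon
      nlinarith
    have : 0 < t * δ := by positivity
    nlinarith
end

section
/- Let ℓ ≥ L and x ∈ ℝ^n, and let z ∈ ℝ^n be the minimizer over ℝ^n of the function w ↦ max_{i=1,…,m} ( ⟨∇f_i(x), w − x⟩ + g_i(w) − g_i(x) ) + (ℓ/2)‖w − x‖² (i.e., z = d_ℓ(x, x)). Then F_i(z) ≤ F_i(x) for every i = 1,…,m. -/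
open scoped RealInnerProductSpace

theorem descent_aux {V : Type*} [NormedAddCommGroup V] [InnerProductSpace ℝ V] [CompleteSpace V]
    (f : V → ℝ) (hd : Differentiable ℝ f) (L : ℝ)
    (hl : ∀ a b, ‖gradient f a - gradient f b‖ ≤ L * ‖a - b‖) (x z : V) :
    f z ≤ f x + inner ℝ (gradient f x) (z - x) + L / 2 * ‖z - x‖ ^ 2 := by
  set d := z - x with hdd
  let h : ℝ → ℝ := fun t => f (x + t • d) - t * inner ℝ (gradient f x) d - L / 2 * t ^ 2 * ‖d‖ ^ 2
  have hh : ∀ t, HasDerivAt h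
      (inner ℝ (gradient f (x + t • d)) d - inner ℝ (gradient f x) d - L * t * ‖d‖ ^ 2) t := by
    intro t
    have h1 : HasDerivAt (fun t : ℝ => x + t • d) d t := by
      simpa using ((hasDerivAt_id t).smul_const d).const_add x
    have h2 := (hd (x + t • d)).hasGradientAt.hasFDerivAt.comp_hasDerivAt t h1
    have h3 := (hasDerivAt_id t).mul_const (inner ℝ (gradient f x) d)
    have h4 := (((hasDerivAt_id t).pow 2).const_mul (L / 2)).mul_const (‖d‖ ^ 2)
    have h5 := (h2.sub h3).sub h4
    refine h5.congr_deriv ?_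
    simp
    left
    ring
  have hanti : AntitoneOn h (Set.Icc 0 1) := by
    apply antitoneOn_of_deriv_nonpos (convex_Icc 0 1)
    · exact fun t _ => (hh t).continuousAt.continuousWithinAt
    · exact fun t _ => (hh t).differentiableAt.differentiableWithinAt
    · intro t ht
      rw [interior_Icc] at ht
      rw [(hh t).deriv, ← inner_sub_left]
      have a1 := real_inner_le_norm (gradient f (x + t • d) - gradient f x) d
      have a2 := hl (x + t • d) x
      rw [add_sub_cancel_left, norm_smul, Real.norm_of_nonneg ht.1.le] at a2
      have a3 := mul_le_mul_of_nonneg_right a2 (norm_nonneg d)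
      nlinarith
  have key := hanti (Set.left_mem_Icc.2 zero_le_one) (Set.right_mem_Icc.2 zero_le_one) zero_le_one
  have e : x + d = z := by simp [hdd]
  simp [h, e] at key ⊢
  linarith

theorem stmt_5
    (n m : ℕ) (hn : 1 ≤ n) (hm : 1 ≤ m)
    (f g F : Fin m → E n → ℝ)
    (L : Fin m → ℝ) (hL : ∀ i, 0 < L i)
    (hfc : ∀ i, ConvexOn ℝ Set.univ (f i))
    (hfd : ∀ i, ContDiff ℝ 1 (f i))
    (hflip : ∀ i a b, ‖gradient (f i) a - gradient (f i) b‖ ≤ L i * ‖a - b‖)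
    (hgc : ∀ i, ConvexOn ℝ Set.univ (g i))
    (hF : ∀ i w, F i w = f i w + g i w)
    (ℓ : ℝ) (hℓ : 0 < ℓ) (hℓL : ∀ i, L i ≤ ℓ)
    (x z : E n)
    (hz : ∀ w : E n,
      (⨆ i, (⟪gradient (f i) x, z - x⟫ + g i z - g i x)) + ℓ / 2 * ‖z - x‖ ^ 2 ≤
        (⨆ i, (⟪gradient (f i) x, w - x⟫ + g i w - g i x)) + ℓ / 2 * ‖w - x‖ ^ 2) :
    ∀ i, F i z ≤ F i x := by
  intro i
  have h0 := hz x
  have hs : (⨆ i, (⟪gradient (f i) x, x - x⟫ + g i x - g i x)) = 0 := by simp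
  have hn0 : ℓ / 2 * ‖x - x‖ ^ 2 = 0 := by simp
  rw [hs, hn0] at h0
  have h1 := le_ciSup (f := fun i => ⟪gradient (f i) x, z - x⟫ + g i z - g i x)
    (Set.finite_range _).bddAbove i
  have h2 := descent_aux (f i) ((hfd i).differentiable (by norm_num)) (L i) (hflip i) x z
  have h3 := mul_le_mul_of_nonneg_right (hℓL i) (sq_nonneg ‖z - x‖)
  rw [hF, hF]
  linarith
end

section
/- Let {x^k}, {y^k}, {z^k} be generated by the multiobjective MFISTA algorithm, and define σ_k(z) := min_{i=1,…,m} ( F_i(x^k) − F_i(z) ). Then for all z ∈ ℝ^n and all k ≥ 0: −σ_{k+1}(z) ≥ (ℓ/2)( ‖z^{k+1}‖² − ‖y^{k+1}‖² − 2⟨z^{k+1} − y^{k+1}, z⟩ ) + ((ℓ − L)/2)‖z^{k+1} − y^{k+1}‖². -/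
open scoped RealInnerProductSpace

theorem aux_line {n : ℕ} {f : E n → ℝ} (hfd : ContDiff ℝ 1 f) (b v : E n) (s : ℝ) :
    HasDerivAt (fun s : ℝ => f (b + s • v)) ⟪gradient f (b + s • v), v⟫ s := by
  have h1 : DifferentiableAt ℝ f (b + s • v) := (hfd.differentiable (by norm_num)) _
  have h2 : HasDerivAt (fun s : ℝ => b + s • v) v s := by
    simpa using ((hasDerivAt_id s).smul_const v).const_add b
  rw [inner_gradient_left]
  exact h1.hasFDerivAt.comp_hasDerivAt s h2

theorem aux_convex {n : ℕ} {f : E n → ℝ} (hfd : ContDiff ℝ 1 f)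
    (hfc : ConvexOn ℝ Set.univ f) (b w : E n) :
    ⟪gradient f b, w - b⟫ + f b ≤ f w := by
  have h := aux_line hfd b (w - b) 0
  have hc : ConvexOn ℝ Set.univ (fun s : ℝ => f (b + s • (w - b))) := by
    refine ⟨convex_univ, fun p _ q _ α β hα hβ hαβ => ?_⟩
    have := hfc.2 (Set.mem_univ (b + p • (w - b))) (Set.mem_univ (b + q • (w - b))) hα hβ hαβ
    have e : α • (b + p • (w - b)) + β • (b + q • (w - b))
        = b + (α • p + β • q) • (w - b) := by
      obtain rfl : α = 1 - β := by linarith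
      simp only [smul_eq_mul]
      module
    rw [e] at this
    exact this
  have := hc.le_slope_of_hasDerivAt (Set.mem_univ 0) (Set.mem_univ 1) one_pos h
  simp [slope_def_field, -inner_gradient_left, -map_sub] at this
  linarith

theorem aux_descent {n : ℕ} {f : E n → ℝ} (hfd : ContDiff ℝ 1 f) {L : ℝ}
    (hl : ∀ a b, ‖gradient f a - gradient f b‖ ≤ L * ‖a - b‖) (b w : E n) :
    f w ≤ ⟪gradient f b, w - b⟫ + f b + L / 2 * ‖w - b‖ ^ 2 := by
  set v := w - b with hv
  have hd : ∀ s : ℝ, HasDerivAt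
      (fun s : ℝ => f (b + s • v) - s * ⟪gradient f b, v⟫ - s ^ 2 * (L / 2 * ‖v‖ ^ 2))
      (⟪gradient f (b + s • v), v⟫ - ⟪gradient f b, v⟫ - (2 * s) * (L / 2 * ‖v‖ ^ 2)) s := by
    intro s
    have h1 := aux_line hfd b v s
    have h2 := (hasDerivAt_id s).mul_const ⟪gradient f b, v⟫
    have h3 := (hasDerivAt_pow 2 s).mul_const (L / 2 * ‖v‖ ^ 2)
    have h5 := (h1.sub h2).sub h3
    refine HasDerivAt.congr_deriv h5 ?_
    simp
  obtain ⟨c, hc, he⟩ := exists_hasDerivAt_eq_slope _ _ (one_pos (α := ℝ))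
    (fun s _ => (hd s).continuousAt.continuousWithinAt) (fun s _ => hd s)
  have h4 : ⟪gradient f (b + c • v), v⟫ - ⟪gradient f b, v⟫ ≤ c * (L * ‖v‖ ^ 2) := by
    rw [← inner_sub_left]
    refine (real_inner_le_norm _ _).trans ?_
    have := hl (b + c • v) b
    rw [add_sub_cancel_left, norm_smul, Real.norm_of_nonneg hc.1.le] at this
    nlinarith [norm_nonneg v, mul_le_mul_of_nonneg_right this (norm_nonneg v)]
  have e : b + v = w := by simp [hv]
  simp [e, -inner_gradient_left] at he
  linarith

theorem aux_strong {n m : ℕ} (hm : 1 ≤ m) (G : Fin m → E n → ℝ)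
    (hG : ∀ i, ConvexOn ℝ Set.univ (G i)) {ℓ : ℝ} (hℓ : 0 < ℓ) (b Z : E n)
    (hd : ∀ w, (⨆ i, G i Z) + ℓ / 2 * ‖Z - b‖ ^ 2 ≤ (⨆ i, G i w) + ℓ / 2 * ‖w - b‖ ^ 2)
    (w : E n) :
    (⨆ i, G i Z) + ℓ / 2 * ‖Z - b‖ ^ 2 + ℓ / 2 * ‖w - Z‖ ^ 2
      ≤ (⨆ i, G i w) + ℓ / 2 * ‖w - b‖ ^ 2 := by
  have : Nonempty (Fin m) := ⟨⟨0, hm⟩⟩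
  have key : ∀ s : ℝ, 0 < s → s < 1 →
      (⨆ i, G i Z) + ℓ / 2 * ‖Z - b‖ ^ 2 + (1 - s) * (ℓ / 2 * ‖w - Z‖ ^ 2)
      ≤ (⨆ i, G i w) + ℓ / 2 * ‖w - b‖ ^ 2 := by
    intro s hs hs1
    have h1 := hd ((1 - s) • Z + s • w)
    have h2 : (⨆ i, G i ((1 - s) • Z + s • w)) ≤ (1 - s) * (⨆ i, G i Z) + s * (⨆ i, G i w) := by
      refine ciSup_le fun i => ?_
      have h3 := (hG i).2 (Set.mem_univ Z) (Set.mem_univ w) (sub_nonneg.2 hs1.le) hs.le (by ring)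
      have h4 : G i Z ≤ ⨆ i, G i Z := le_ciSup (f := fun i => G i Z) (Set.finite_range _).bddAbove i
      have h5 : G i w ≤ ⨆ i, G i w := le_ciSup (f := fun i => G i w) (Set.finite_range _).bddAbove i
      simp only [smul_eq_mul] at h3
      have := mul_le_mul_of_nonneg_left h4 (sub_nonneg.2 hs1.le)
      have := mul_le_mul_of_nonneg_left h5 hs.le
      linarith
    have h6 : ‖(1 - s) • Z + s • w - b‖ ^ 2
        = (1 - s) * ‖Z - b‖ ^ 2 + s * ‖w - b‖ ^ 2 - s * (1 - s) * ‖w - Z‖ ^ 2 := by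
      have e1 : (1 - s) • Z + s • w - b = (1 - s) • (Z - b) + s • (w - b) := by module
      have e2 : w - Z = (w - b) - (Z - b) := by abel
      rw [e1, e2, norm_add_sq_real, norm_sub_sq_real (w - b), norm_smul, norm_smul, mul_pow,
        mul_pow, real_inner_smul_left, real_inner_smul_right, Real.norm_eq_abs, Real.norm_eq_abs,
        sq_abs, sq_abs, real_inner_comm (Z - b)]
      ring
    rw [h6] at h1
    refine le_of_mul_le_mul_left ?_ hs
    nlinarith
  set C := ℓ / 2 * ‖w - Z‖ ^ 2 with hC
  have hC0 : 0 ≤ C := by positivity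
  refine le_of_forall_pos_le_add fun ε hε => ?_
  have h7 : 0 < ε / (C + 1) := by positivity
  have h8 := key (min (1 / 2) (ε / (C + 1))) (lt_min (by norm_num) h7)
    (lt_of_le_of_lt (min_le_left _ _) (by norm_num))
  have h9 : min (1 / 2) (ε / (C + 1)) * C ≤ ε := by
    calc min (1 / 2) (ε / (C + 1)) * C ≤ ε / (C + 1) * (C + 1) := by
          gcongr
          · exact min_le_right _ _
          · linarith
      _ = ε := by field_simp
  linarith

theorem stmt_7
    (n m : ℕ) (hn : 1 ≤ n) (hm : 1 ≤ m)
    (f g F : Fin m → E n → ℝ)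
    (L : Fin m → ℝ) (hL : ∀ i, 0 < L i)
    (hfc : ∀ i, ConvexOn ℝ Set.univ (f i))
    (hfd : ∀ i, ContDiff ℝ 1 (f i))
    (hflip : ∀ i a b, ‖gradient (f i) a - gradient (f i) b‖ ≤ L i * ‖a - b‖)
    (hgc : ∀ i, ConvexOn ℝ Set.univ (g i))
    (hF : ∀ i w, F i w = f i w + g i w)
    (ℓ : ℝ) (hℓ : 0 < ℓ) (hℓL : ∀ i, L i ≤ ℓ)
    (d : E n → E n → E n)
    (hd : ∀ a b w,
      (⨆ i, (⟪gradient (f i) b, d a b - b⟫ + g i (d a b) + f i b - F i a)) +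
          ℓ / 2 * ‖d a b - b‖ ^ 2 ≤
        (⨆ i, (⟪gradient (f i) b, w - b⟫ + g i w + f i b - F i a)) +
          ℓ / 2 * ‖w - b‖ ^ 2)
    (x y z : ℕ → E n) (t : ℕ → ℝ)
    (hy1 : y 1 = x 0) (ht1 : t 1 = 1)
    (ht : ∀ k, 1 ≤ k → t (k + 1) = (1 + Real.sqrt (1 + 4 * t k ^ 2)) / 2)
    (hz : ∀ k, 1 ≤ k → z k = d (x (k - 1)) (y k))
    (hxpos : ∀ k, 1 ≤ k → 0 ≤ (⨆ i, (F i (x (k - 1)) - F i (z k))) → x k = z k)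
    (hxneg : ∀ k, 1 ≤ k → ¬ 0 ≤ (⨆ i, (F i (x (k - 1)) - F i (z k))) → x k = x (k - 1))
    (hy : ∀ k, 1 ≤ k →
      y (k + 1) = x k + (t k / t (k + 1)) • (z k - x k) +
        ((t k - 1) / t (k + 1)) • (x k - x (k - 1))) :
    ∀ (w : E n) (k : ℕ),
      -(⨅ i, (F i (x (k + 1)) - F i w)) ≥
        ℓ / 2 * (‖z (k + 1)‖ ^ 2 - ‖y (k + 1)‖ ^ 2 -
            2 * ⟪z (k + 1) - y (k + 1), w⟫) +
          (ℓ - ⨆ i, L i) / 2 * ‖z (k + 1) - y (k + 1)‖ ^ 2 := by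
  intro w k
  have : Nonempty (Fin m) := ⟨⟨0, hm⟩⟩
  have bA : ∀ h : Fin m → ℝ, BddAbove (Set.range h) := fun h => (Set.finite_range h).bddAbove
  have bB : ∀ h : Fin m → ℝ, BddBelow (Set.range h) := fun h => (Set.finite_range h).bddBelow
  have hk : 1 ≤ k + 1 := by omega
  have hzk := hz (k + 1) hk
  have hp := hxpos (k + 1) hk
  have hq := hxneg (k + 1) hk
  rw [Nat.add_sub_cancel] at hzk hp hq
  have hdk := hd (x k) (y (k + 1))
  rw [← hzk] at hdk
  set a := x k
  set b := y (k + 1)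
  set Z := z (k + 1)
  have hG : ∀ i, ConvexOn ℝ Set.univ
      (fun w => ⟪gradient (f i) b, w - b⟫ + g i w + f i b - F i a) := by
    intro i
    refine ⟨convex_univ, fun p _ q _ α β hα hβ hαβ => ?_⟩
    have := (hgc i).2 (Set.mem_univ p) (Set.mem_univ q) hα hβ hαβ
    obtain rfl : α = 1 - β := by linarith
    simp only [smul_eq_mul, inner_sub_right, inner_add_right, real_inner_smul_right] at this ⊢
    linarith
  have hs := aux_strong hm _ hG hℓ b Z hdk w
  -- upper bound
  have hu : ∀ v : E n, (⨆ i, (⟪gradient (f i) b, w - b⟫ + g i w + f i b - F i a))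
      ≤ ⨆ i, (F i w - F i a) := by
    intro _
    refine ciSup_mono (bA _) fun i => ?_
    have := aux_convex (hfd i) (hfc i) b w
    rw [hF i w]
    linarith
  have hu := hu w
  have hlow : (⨆ i, (F i Z - F i a)) ≤
      (⨆ i, (⟪gradient (f i) b, Z - b⟫ + g i Z + f i b - F i a)) + (⨆ i, L i) / 2 * ‖Z - b‖ ^ 2 := by
    refine ciSup_le fun i => ?_
    have h1 := aux_descent (hfd i) (hflip i) b Z
    have h2 := le_ciSup (bA fun i => ⟪gradient (f i) b, Z - b⟫ + g i Z + f i b - F i a) i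
    have h3 := mul_le_mul_of_nonneg_right (le_ciSup (bA L) i) (sq_nonneg ‖Z - b‖)
    rw [hF i Z]
    linarith
  have hsplit : (⨆ i, (F i w - F i a)) - (⨆ i, (F i Z - F i a)) ≤ -(⨅ i, (F i (x (k + 1)) - F i w)) := by
    rw [sub_le_iff_le_add]
    refine ciSup_le fun i => ?_
    have h1 := ciInf_le (bB fun i => F i (x (k + 1)) - F i w) i
    have h2 := le_ciSup (bA fun i => F i Z - F i a) i
    by_cases hc : 0 ≤ ⨆ i, (F i a - F i Z)
    · rw [hp hc] at h1 ⊢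
      linarith
    · rw [hq hc] at h1 ⊢
      have h3 := le_ciSup (bA fun i => F i a - F i Z) i
      linarith
  have hn1 : ‖Z‖ ^ 2 - ‖b‖ ^ 2 - 2 * ⟪Z - b, w⟫ = ‖w - Z‖ ^ 2 - ‖w - b‖ ^ 2 := by
    rw [norm_sub_sq_real, norm_sub_sq_real, inner_sub_left, real_inner_comm Z, real_inner_comm b]
    ring
  rw [hn1]
  linarith
end

section
/- Let t : ℕ → ℝ satisfy t_1 = 1 and t_{k+1} = (1 + √(1 + 4 t_k²))/2 for all k ≥ 1. Then t_k ≥ (k + 1)/2 for all k ≥ 1. -/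
theorem stmt_9 (t : ℕ → ℝ) (ht1 : t 1 = 1)
    (ht : ∀ k, 1 ≤ k → t (k + 1) = (1 + Real.sqrt (1 + 4 * t k ^ 2)) / 2) :
    ∀ k : ℕ, 1 ≤ k → ((k : ℝ) + 1) / 2 ≤ t k := by
  intro k hk
  induction k, hk using Nat.le_induction with
  | base => rw [ht1]; norm_num
  | succ k hk ih =>
    rw [ht k hk]
    have h : 2 * t k ≤ Real.sqrt (1 + 4 * t k ^ 2) := by
      apply Real.le_sqrt_of_sq_le
      nlinarith
    push_cast
    linarith
end

section
/- Let t : ℕ → ℝ satisfy t_1 = 1 and t_{k+1} = (1 + √(1 + 4 t_k²))/2 for all k ≥ 1. Then for all k ≥ 1: 1 − ((t_k − 1)/t_{k+1})² ≥ 1/t_k and 1/t_k > 0. -/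
theorem stmt_11 (t : ℕ → ℝ) (ht1 : t 1 = 1)
    (ht : ∀ k, 1 ≤ k → t (k + 1) = (1 + Real.sqrt (1 + 4 * t k ^ 2)) / 2) :
    ∀ k, 1 ≤ k → 1 / t k ≤ 1 - ((t k - 1) / t (k + 1)) ^ 2 ∧ 0 < 1 / t k := by
  have hge : ∀ k, 1 ≤ k → 1 ≤ t k := by
    intro k hk
    induction k, hk using Nat.le_induction with
    | base => exact ht1.ge
    | succ k hk ih =>
      rw [ht k hk]
      have : 1 ≤ Real.sqrt (1 + 4 * t k ^ 2) := Real.le_sqrt_of_sq_le (by nlinarith)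
      linarith
  intro k hk
  have h1 := hge k hk
  have hpos : 0 < t k := by linarith
  have hs : t k ≤ t (k + 1) := by
    rw [ht k hk]
    have : 2 * t k ≤ Real.sqrt (1 + 4 * t k ^ 2) := Real.le_sqrt_of_sq_le (by nlinarith)
    linarith
  refine ⟨?_, by positivity⟩
  have hu : 1 / t k ≤ 1 := by rw [div_le_one hpos]; exact h1
  have hu0 : 0 < 1 / t k := by positivity
  have h2 : (t k - 1) / t (k + 1) ≤ 1 - 1 / t k := by
    have : (t k - 1) / t (k + 1) ≤ (t k - 1) / t k :=
      div_le_div_of_nonneg_left (by linarith) hpos hs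
    have e : (t k - 1) / t k = 1 - 1 / t k := by field_simp
    linarith
  have h3 : 0 ≤ (t k - 1) / t (k + 1) := div_nonneg (by linarith) (by linarith)
  nlinarith
end

section
/- Let {x^k} be generated by the multiobjective MFISTA algorithm. Let X* denote the set of weakly Pareto optimal points of F and let Ω := { x ∈ ℝ^n : F_i(x) ≤ F_i(x^0) for all i }. Assume X* is nonempty, assume that for every x ∈ Ω there exists x* ∈ X* with F_i(x*) ≤ F_i(x) for all i, and assume R := sup_{F* ∈ F(X* ∩ Ω)} inf_{x : F(x) = F*} ‖x − x^0‖² < ∞. Then for all k ≥ 1: u_0(x^k) ≤ 2ℓR/(k + 1)², where u_0(x) := sup_{z ∈ ℝ^n} min_{i=1,…,m} ( F_i(x) − F_i(z) ). -/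
open scoped RealInnerProductSpace

theorem grad_ineq_aux {n : ℕ} (f : E n → ℝ) (hfc : ConvexOn ℝ Set.univ f)
    (hfd : ContDiff ℝ 1 f) (y w : E n) : f y + ⟪gradient f y, w - y⟫ ≤ f w := by
  have hdiff : Differentiable ℝ f := hfd.differentiable (by norm_num)
  have hg : HasGradientAt f (gradient f y) y := (hdiff y).hasGradientAt
  have hline : HasDerivAt (fun s : ℝ => f (y + s • (w - y))) ⟪gradient f y, w - y⟫ 0 := by
    have h1 : HasDerivAt (fun s : ℝ => y + s • (w - y)) (w - y) 0 := by
      simpa using ((hasDerivAt_id (0:ℝ)).smul_const (w - y)).const_add y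
    have h2 : HasFDerivAt f (InnerProductSpace.toDual ℝ (E n) (gradient f y))
        (y + (0:ℝ) • (w - y)) := by
      simpa using hg.hasFDerivAt
    simpa [Function.comp_def] using h2.comp_hasDerivAt (0:ℝ) h1
  have hc : ConvexOn ℝ Set.univ (fun s : ℝ => f (y + s • (w - y))) := by
    refine ⟨convex_univ, ?_⟩
    intro a _ b _ p q hp hq hpq
    have := hfc.2 (Set.mem_univ (y + a • (w - y))) (Set.mem_univ (y + b • (w - y))) hp hq hpq
    have e : y + (p • a + q • b) • (w - y) = p • (y + a • (w - y)) + q • (y + b • (w - y)) := by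
      have : y = (p + q) • y := by rw [hpq, one_smul]
      nth_rewrite 1 [this]
      simp only [smul_eq_mul]
      module
    simpa only [e] using this
  have := hc.le_slope_of_hasDerivAt (Set.mem_univ 0) (Set.mem_univ 1) zero_lt_one hline
  generalize ⟪gradient f y, w - y⟫ = q at this ⊢
  simp [slope_def_field] at this
  linarith

theorem descent_aux_s16 {n : ℕ} (f : E n → ℝ) (hfd : ContDiff ℝ 1 f) (L : ℝ)
    (hflip : ∀ a b, ‖gradient f a - gradient f b‖ ≤ L * ‖a - b‖) (y z : E n) :
    f z ≤ f y + ⟪gradient f y, z - y⟫ + L / 2 * ‖z - y‖ ^ 2 := by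
  have hdiff : Differentiable ℝ f := hfd.differentiable (by norm_num)
  let φ : ℝ → ℝ := fun s => f (y + s • (z - y)) - s * ⟪gradient f y, z - y⟫
    - s ^ 2 * (L / 2 * ‖z - y‖ ^ 2)
  have hφ : ∀ s, HasDerivAt φ (⟪gradient f (y + s • (z - y)), z - y⟫
      - ⟪gradient f y, z - y⟫ - (2 * s) * (L / 2 * ‖z - y‖ ^ 2)) s := by
    intro s
    have h1 : HasDerivAt (fun s : ℝ => y + s • (z - y)) (z - y) s := by
      simpa using ((hasDerivAt_id s).smul_const (z - y)).const_add y
    have h2 : HasDerivAt (fun s : ℝ => f (y + s • (z - y)))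
        ⟪gradient f (y + s • (z - y)), z - y⟫ s := by
      simpa [Function.comp_def] using
        (hdiff (y + s • (z - y))).hasGradientAt.hasFDerivAt.comp_hasDerivAt s h1
    have h3 : HasDerivAt (fun s : ℝ => s * ⟪gradient f y, z - y⟫) ⟪gradient f y, z - y⟫ s := by
      simpa using (hasDerivAt_id s).mul_const ⟪gradient f y, z - y⟫
    have h4 : HasDerivAt (fun s : ℝ => s ^ 2 * (L / 2 * ‖z - y‖ ^ 2))
        ((2 * s) * (L / 2 * ‖z - y‖ ^ 2)) s := by
      simpa using (hasDerivAt_pow 2 s).mul_const (L / 2 * ‖z - y‖ ^ 2)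
    exact (h2.sub h3).sub h4
  have hanti : AntitoneOn φ (Set.Icc 0 1) := by
    apply antitoneOn_of_deriv_nonpos (convex_Icc 0 1)
    · exact fun s _ => (hφ s).continuousAt.continuousWithinAt
    · exact fun s _ => (hφ s).differentiableAt.differentiableWithinAt
    · intro s hs
      rw [interior_Icc] at hs
      rw [(hφ s).deriv, ← inner_sub_left]
      have h1 := real_inner_le_norm (gradient f (y + s • (z - y)) - gradient f y) (z - y)
      have h2 := hflip (y + s • (z - y)) y
      rw [add_sub_cancel_left, norm_smul, Real.norm_of_nonneg hs.1.le] at h2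
      have h3 := mul_le_mul_of_nonneg_right h2 (norm_nonneg (z - y))
      nlinarith
  have := hanti (Set.left_mem_Icc.2 zero_le_one) (Set.right_mem_Icc.2 zero_le_one) zero_le_one
  simp only [φ] at this
  generalize ⟪gradient f y, z - y⟫ = q at this ⊢
  simp at this
  linarith

theorem norm_comb_aux {n : ℕ} (a b : E n) (s : ℝ) :
    ‖(1 - s) • a + s • b‖ ^ 2 = (1 - s) * ‖a‖ ^ 2 + s * ‖b‖ ^ 2 - s * (1 - s) * ‖a - b‖ ^ 2 := by
  rw [norm_add_sq_real, norm_sub_sq_real, norm_smul, norm_smul, inner_smul_left, inner_smul_right,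
    mul_pow, mul_pow, Real.norm_eq_abs, Real.norm_eq_abs, sq_abs, sq_abs]
  simp
  ring

theorem strong_aux {n : ℕ} (h : E n → ℝ) (hc : ConvexOn ℝ Set.univ h) (ℓ : ℝ) (hℓ : 0 < ℓ)
    (y z : E n) (hmin : ∀ w, h z + ℓ / 2 * ‖z - y‖ ^ 2 ≤ h w + ℓ / 2 * ‖w - y‖ ^ 2) (w : E n) :
    h z + ℓ / 2 * ‖z - y‖ ^ 2 + ℓ / 2 * ‖z - w‖ ^ 2 ≤ h w + ℓ / 2 * ‖w - y‖ ^ 2 := by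
  have key : ∀ s : ℝ, 0 < s → s < 1 → h z + ℓ / 2 * ‖z - y‖ ^ 2 + (1 - s) * (ℓ / 2 * ‖z - w‖ ^ 2)
      ≤ h w + ℓ / 2 * ‖w - y‖ ^ 2 := by
    intro s h0 h1
    have a1 := hmin ((1 - s) • z + s • w)
    have a2 := hc.2 (Set.mem_univ z) (Set.mem_univ w) (sub_nonneg.2 h1.le) h0.le (by ring)
    have e : (1 - s) • z + s • w - y = (1 - s) • (z - y) + s • (w - y) := by module
    rw [e, norm_comb_aux, sub_sub_sub_cancel_right] at a1
    simp only [smul_eq_mul] at a2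
    have : s * (h z + ℓ / 2 * ‖z - y‖ ^ 2 + (1 - s) * (ℓ / 2 * ‖z - w‖ ^ 2))
      ≤ s * (h w + ℓ / 2 * ‖w - y‖ ^ 2) := by linarith
    exact le_of_mul_le_mul_left this h0
  have hlim : Filter.Tendsto (fun s : ℝ => h z + ℓ / 2 * ‖z - y‖ ^ 2
      + (1 - s) * (ℓ / 2 * ‖z - w‖ ^ 2)) (nhdsWithin 0 (Set.Ioi 0))
      (nhds (h z + ℓ / 2 * ‖z - y‖ ^ 2 + (1 - 0) * (ℓ / 2 * ‖z - w‖ ^ 2))) := by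
    apply Filter.Tendsto.mono_left _ nhdsWithin_le_nhds
    apply Continuous.tendsto
    fun_prop
  have := le_of_tendsto hlim (by
    filter_upwards [Ioo_mem_nhdsGT (zero_lt_one (α := ℝ))] with s hs
    exact key s hs.1 hs.2)
  simpa using this

theorem step_aux (n m : ℕ) (hm : 1 ≤ m)
    (f g F : Fin m → E n → ℝ) (L : Fin m → ℝ)
    (hfc : ∀ i, ConvexOn ℝ Set.univ (f i))
    (hfd : ∀ i, ContDiff ℝ 1 (f i))
    (hflip : ∀ i a b, ‖gradient (f i) a - gradient (f i) b‖ ≤ L i * ‖a - b‖)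
    (hgc : ∀ i, ConvexOn ℝ Set.univ (g i))
    (hF : ∀ i w, F i w = f i w + g i w)
    (ℓ : ℝ) (hℓ : 0 < ℓ) (hℓL : ∀ i, L i ≤ ℓ)
    (d : E n → E n → E n)
    (hd : ∀ a b w,
      (⨆ i, (⟪gradient (f i) b, d a b - b⟫ + g i (d a b) + f i b - F i a)) +
          ℓ / 2 * ‖d a b - b‖ ^ 2 ≤
        (⨆ i, (⟪gradient (f i) b, w - b⟫ + g i w + f i b - F i a)) +
          ℓ / 2 * ‖w - b‖ ^ 2)
    (a b w : E n) (c : ℝ) (hcw : ∀ j, F j w - F j a ≤ c) (i : Fin m) :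
    F i (d a b) - F i a ≤ c + ℓ / 2 * (‖w - b‖ ^ 2 - ‖d a b - w‖ ^ 2) := by
  haveI : Nonempty (Fin m) := ⟨⟨0, hm⟩⟩
  let h : E n → ℝ := fun w => ⨆ i, (⟪gradient (f i) b, w - b⟫ + g i w + f i b - F i a)
  have hle : ∀ w i, ⟪gradient (f i) b, w - b⟫ + g i w + f i b - F i a ≤ h w := fun w i =>
    le_ciSup (f := fun i => ⟪gradient (f i) b, w - b⟫ + g i w + f i b - F i a)
      (Set.finite_range _).bddAbove i
  have hc : ConvexOn ℝ Set.univ h := by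
    refine ⟨convex_univ, ?_⟩
    intro u _ v _ p q hp hq hpq
    apply ciSup_le
    intro i
    have h1 := mul_le_mul_of_nonneg_left (hle u i) hp
    have h2 := mul_le_mul_of_nonneg_left (hle v i) hq
    have h3 := (hgc i).2 (Set.mem_univ u) (Set.mem_univ v) hp hq hpq
    have e : p • u + q • v - b = p • (u - b) + q • (v - b) := by
      have : b = (p + q) • b := by rw [hpq, one_smul]
      nth_rewrite 1 [this]
      module
    rw [e, inner_add_right, inner_smul_right, inner_smul_right]
    simp only [smul_eq_mul] at h3 ⊢
    have e2 : f i b - F i a = (p + q) * (f i b - F i a) := by rw [hpq, one_mul]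
    linarith
  have hs := strong_aux h hc ℓ hℓ b (d a b) (fun w => hd a b w) w
  have h1 := descent_aux_s16 (f i) (hfd i) (L i) (hflip i) b (d a b)
  have h2 : h w ≤ c := by
    apply ciSup_le
    intro j
    have := grad_ineq_aux (f j) (hfc j) (hfd j) b w
    have := hcw j
    rw [hF j w] at this
    linarith
  have h3 := hle (d a b) i
  have h4 : L i / 2 * ‖d a b - b‖ ^ 2 ≤ ℓ / 2 * ‖d a b - b‖ ^ 2 := by
    have := hℓL i
    gcongr
  rw [hF i (d a b)]
  linarith

theorem stmt_16
    (n m : ℕ) (hn : 1 ≤ n) (hm : 1 ≤ m)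
    (f g F : Fin m → E n → ℝ)
    (L : Fin m → ℝ) (hL : ∀ i, 0 < L i)
    (hfc : ∀ i, ConvexOn ℝ Set.univ (f i))
    (hfd : ∀ i, ContDiff ℝ 1 (f i))
    (hflip : ∀ i a b, ‖gradient (f i) a - gradient (f i) b‖ ≤ L i * ‖a - b‖)
    (hgc : ∀ i, ConvexOn ℝ Set.univ (g i))
    (hF : ∀ i w, F i w = f i w + g i w)
    (ℓ : ℝ) (hℓ : 0 < ℓ) (hℓL : ∀ i, L i ≤ ℓ)
    (d : E n → E n → E n)
    (hd : ∀ a b w,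
      (⨆ i, (⟪gradient (f i) b, d a b - b⟫ + g i (d a b) + f i b - F i a)) +
          ℓ / 2 * ‖d a b - b‖ ^ 2 ≤
        (⨆ i, (⟪gradient (f i) b, w - b⟫ + g i w + f i b - F i a)) +
          ℓ / 2 * ‖w - b‖ ^ 2)
    (x y z : ℕ → E n) (t : ℕ → ℝ)
    (hy1 : y 1 = x 0) (ht1 : t 1 = 1)
    (ht : ∀ k, 1 ≤ k → t (k + 1) = (1 + Real.sqrt (1 + 4 * t k ^ 2)) / 2)
    (hz : ∀ k, 1 ≤ k → z k = d (x (k - 1)) (y k))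
    (hxpos : ∀ k, 1 ≤ k → 0 ≤ (⨆ i, (F i (x (k - 1)) - F i (z k))) → x k = z k)
    (hxneg : ∀ k, 1 ≤ k → ¬ 0 ≤ (⨆ i, (F i (x (k - 1)) - F i (z k))) → x k = x (k - 1))
    (hy : ∀ k, 1 ≤ k →
      y (k + 1) = x k + (t k / t (k + 1)) • (z k - x k) +
        ((t k - 1) / t (k + 1)) • (x k - x (k - 1)))
    (Xstar : Set (E n)) (hX : Xstar = {a | ¬ ∃ w : E n, ∀ i, F i w < F i a})
    (Ω : Set (E n)) (hΩ : Ω = {w | ∀ i, F i w ≤ F i (x 0)})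
    (hne : Xstar.Nonempty)
    (hdom : ∀ w ∈ Ω, ∃ a ∈ Xstar, ∀ i, F i a ≤ F i w)
    (A : Set ℝ)
    (hA : A = {r | ∃ a ∈ Xstar ∩ Ω,
      r = sInf {s | ∃ w : E n, (∀ i, F i w = F i a) ∧ s = ‖w - x 0‖ ^ 2}})
    (hbdd : BddAbove A)
    (R : ℝ) (hR : R = sSup A) :
    ∀ k, 1 ≤ k →
      (⨆ v : E n, (((⨅ i, (F i (x k) - F i v)) : ℝ) : EReal)) ≤
        ((2 * ℓ * R / ((k : ℝ) + 1) ^ 2 : ℝ) : EReal) := by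
  haveI : Nonempty (Fin m) := ⟨⟨0, hm⟩⟩
  have step := step_aux n m hm f g F L hfc hfd hflip hgc hF ℓ hℓ hℓL d hd
  have hFc : ∀ i, ConvexOn ℝ Set.univ (F i) := by
    intro i
    have : F i = f i + g i := by
      funext w
      exact hF i w
    rw [this]
    exact (hfc i).add (hgc i)
  -- properties of t
  have htge : ∀ k : ℕ, ((k : ℝ) + 1 + 1) / 2 ≤ t (k + 1) := by
    intro k
    induction k with
    | zero => rw [ht1]; norm_num
    | succ k ih =>
      rw [ht (k + 1) (by omega)]
      have : 2 * t (k + 1) ≤ Real.sqrt (1 + 4 * t (k + 1) ^ 2) := by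
        apply Real.le_sqrt_of_sq_le
        nlinarith
      push_cast
      linarith
  have ht1' : ∀ k : ℕ, 1 ≤ t (k + 1) := by
    intro k
    have := htge k
    have h0 : (0 : ℝ) ≤ k := Nat.cast_nonneg k
    linarith
  have htsq : ∀ k : ℕ, t (k + 2) ^ 2 - t (k + 2) = t (k + 1) ^ 2 := by
    intro k
    rw [ht (k + 1) (by omega)]
    have := Real.sq_sqrt (show 0 ≤ 1 + 4 * t (k + 1) ^ 2 by positivity)
    nlinarith
  -- case analysis for the x-update
  have hcase : ∀ k : ℕ, x (k + 1) = z (k + 1) ∨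
      (x (k + 1) = x k ∧ ∀ i, F i (x k) ≤ F i (z (k + 1))) := by
    intro k
    by_cases h : 0 ≤ (⨆ i, (F i (x k) - F i (z (k + 1))))
    · exact Or.inl (hxpos (k + 1) (by omega) h)
    · refine Or.inr ⟨hxneg (k + 1) (by omega) h, fun i => ?_⟩
      have := le_ciSup (f := fun i => F i (x k) - F i (z (k + 1)))
        (Set.finite_range _).bddAbove i
      linarith
  have hFxz : ∀ k i, F i (x (k + 1)) ≤ F i (z (k + 1)) := by
    intro k i
    rcases hcase k with h | ⟨h, h'⟩
    · rw [h]
    · rw [h]; exact h' i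
  have hzz : ∀ k : ℕ, z (k + 1) = d (x k) (y (k + 1)) := fun k => hz (k + 1) (by omega)
  have hyy : ∀ k : ℕ, y (k + 2) = x (k + 1) + (t (k + 1) / t (k + 2)) • (z (k + 1) - x (k + 1)) +
        ((t (k + 1) - 1) / t (k + 2)) • (x (k + 1) - x k) := fun k => hy (k + 1) (by omega)
  -- monotonicity with respect to the starting point
  have hdec : ∀ k i, F i (x (k + 1)) - F i (x k) ≤
      ℓ / 2 * (‖x k - y (k + 1)‖ ^ 2 - ‖z (k + 1) - x k‖ ^ 2) := by
    intro k i
    have := step (x k) (y (k + 1)) (x k) 0 (fun j => by simp) i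
    rw [← hzz] at this
    have := hFxz k i
    linarith
  have hyx : ∀ k, ‖x (k + 1) - y (k + 2)‖ ≤ ‖z (k + 1) - x k‖ := by
    intro k
    have a1 := ht1' k
    have a2 := ht1' (k + 1)
    have a3 := htsq k
    have a4 : t (k + 1) ≤ t (k + 2) := by nlinarith
    have a5 : 0 < t (k + 2) := by linarith
    rw [norm_sub_rev, hyy k]
    rcases hcase k with h | ⟨h, _⟩
    · rw [h]
      have e : z (k + 1) + (t (k + 1) / t (k + 2)) • (z (k + 1) - z (k + 1)) +
        ((t (k + 1) - 1) / t (k + 2)) • (z (k + 1) - x k) - z (k + 1) =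
        ((t (k + 1) - 1) / t (k + 2)) • (z (k + 1) - x k) := by module
      rw [e, norm_smul, Real.norm_of_nonneg (div_nonneg (by linarith) a5.le)]
      refine mul_le_of_le_one_left (norm_nonneg _) ?_
      rw [div_le_one a5]; linarith
    · rw [h]
      have e : x k + (t (k + 1) / t (k + 2)) • (z (k + 1) - x k) +
        ((t (k + 1) - 1) / t (k + 2)) • (x k - x k) - x k =
        (t (k + 1) / t (k + 2)) • (z (k + 1) - x k) := by module
      rw [e, norm_smul, Real.norm_of_nonneg (div_nonneg (by linarith) a5.le)]
      refine mul_le_of_le_one_left (norm_nonneg _) ?_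
      rw [div_le_one a5]; linarith
  have hmono : ∀ k i, F i (x (k + 1)) ≤ F i (x 0) - ℓ / 2 * ‖z (k + 1) - x k‖ ^ 2 := by
    intro k i
    induction k with
    | zero =>
      have := hdec 0 i
      simp only [zero_add, hy1, sub_self, norm_zero] at this ⊢
      linarith
    | succ k ih =>
      have h1 := hdec (k + 1) i
      have h2 : ℓ / 2 * ‖x (k + 1) - y (k + 2)‖ ^ 2 ≤ ℓ / 2 * ‖z (k + 1) - x k‖ ^ 2 := by
        have := hyx k
        gcongr
      linarith
  have hmono' : ∀ k i, F i (x (k + 1)) ≤ F i (x 0) := by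
    intro k i
    have := hmono k i
    have : 0 ≤ ℓ / 2 * ‖z (k + 1) - x k‖ ^ 2 := by positivity
    linarith
  -- the merit gap
  let σ : E n → E n → ℝ := fun p w => ⨅ i, (F i p - F i w)
  have hσle : ∀ p w i, σ p w ≤ F i p - F i w := fun p w i =>
    ciInf_le (f := fun i => F i p - F i w) (Set.finite_range _).bddBelow i
  have hrec : ∀ k w, t (k + 1) ^ 2 * σ (x (k + 1)) w ≤
      (t (k + 1) ^ 2 - t (k + 1)) * σ (x k) w +
      ℓ / 2 * (‖t (k + 1) • y (k + 1) - (t (k + 1) - 1) • x k - w‖ ^ 2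
        - ‖t (k + 1) • z (k + 1) - (t (k + 1) - 1) • x k - w‖ ^ 2) := by
    intro k w
    set T := t (k + 1) with hT
    have hT1 : 1 ≤ T := ht1' k
    have hT0 : 0 < T := by linarith
    set s := 1 / T with hs
    have hs0 : 0 ≤ s := by positivity
    have hs1 : s ≤ 1 := by rw [hs, div_le_one hT0]; exact hT1
    have hTs : T * s = 1 := by rw [hs]; field_simp
    set v := (1 - s) • x k + s • w with hv
    have hcv : ∀ j, F j v - F j (x k) ≤ -(s * σ (x k) w) := by
      intro j
      have h1 := (hFc j).2 (Set.mem_univ (x k)) (Set.mem_univ w) (sub_nonneg.2 hs1) hs0 (by ring)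
      have h2 := mul_le_mul_of_nonneg_left (hσle (x k) w j) hs0
      simp only [smul_eq_mul] at h1
      linarith
    have hst := step (x k) (y (k + 1)) v _ hcv
    rw [← hzz] at hst
    have h1 : σ (x (k + 1)) w - σ (x k) w ≤ -(s * σ (x k) w) +
        ℓ / 2 * (‖v - y (k + 1)‖ ^ 2 - ‖z (k + 1) - v‖ ^ 2) := by
      obtain ⟨i, hi⟩ := exists_eq_ciInf_of_finite (f := fun i => F i (x k) - F i w)
      have b1 := hσle (x (k + 1)) w i
      have b2 := hst i
      have b3 := hFxz k i
      have b4 : F i (x k) - F i w = σ (x k) w := hi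
      linarith
    have e1 : T • y (k + 1) - (T - 1) • x k - w = -(T • (v - y (k + 1))) := by
      have : T • v = (T - T * s) • x k + (T * s) • w := by rw [hv]; module
      rw [smul_sub, this, hTs]; module
    have e2 : T • z (k + 1) - (T - 1) • x k - w = T • (z (k + 1) - v) := by
      have : T • v = (T - T * s) • x k + (T * s) • w := by rw [hv]; module
      rw [smul_sub, this, hTs]; module
    rw [e1, e2, norm_neg, norm_smul, norm_smul, mul_pow, mul_pow, Real.norm_of_nonneg hT0.le]
    have h2 := mul_le_mul_of_nonneg_left h1 (sq_nonneg T)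
    have e3 : T ^ 2 * (s * σ (x k) w) = T * σ (x k) w := by
      calc T ^ 2 * (s * σ (x k) w) = T * (T * s) * σ (x k) w := by ring
        _ = _ := by rw [hTs, mul_one]
    linarith
  have hmain : ∀ k w, t (k + 1) ^ 2 * σ (x (k + 1)) w +
      ℓ / 2 * ‖t (k + 1) • z (k + 1) - (t (k + 1) - 1) • x k - w‖ ^ 2 ≤
      ℓ / 2 * ‖w - x 0‖ ^ 2 := by
    intro k w
    induction k with
    | zero =>
      have := hrec 0 w
      simp only [zero_add, ht1, hy1] at this ⊢
      have e : (1:ℝ) • x 0 - ((1:ℝ) - 1) • x 0 - w = -(w - x 0) := by module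
      rw [e, norm_neg] at this
      linarith
    | succ k ih =>
      have h1 := hrec (k + 1) w
      have h0 : t (k + 2) ≠ 0 := by
        have := ht1' (k + 1)
        intro h
        rw [h] at this
        linarith
      have e : t (k + 2) • y (k + 2) - (t (k + 2) - 1) • x (k + 1) - w =
          t (k + 1) • z (k + 1) - (t (k + 1) - 1) • x k - w := by
        rw [hyy k, smul_add, smul_add, smul_smul, smul_smul, mul_div_cancel₀ _ h0,
          mul_div_cancel₀ _ h0]
        module
      have h2 := htsq k
      simp only [Nat.add_assoc, Nat.reduceAdd] at h1 ⊢
      rw [e, h2] at h1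
      linarith
  have hbound : ∀ k w, σ (x (k + 1)) w ≤ 2 * ℓ / ((k : ℝ) + 1 + 1) ^ 2 * ‖w - x 0‖ ^ 2 := by
    intro k w
    have h1 := hmain k w
    have h2 : 0 ≤ ℓ / 2 * ‖t (k + 1) • z (k + 1) - (t (k + 1) - 1) • x k - w‖ ^ 2 := by positivity
    have h3 := htge k
    have hk : (0:ℝ) < (k : ℝ) + 1 + 1 := by positivity
    rcases le_total (σ (x (k + 1)) w) 0 with h | h
    · exact h.trans (by positivity)
    · have h4 : (((k : ℝ) + 1 + 1) / 2) ^ 2 * σ (x (k + 1)) w ≤ t (k + 1) ^ 2 * σ (x (k + 1)) w := by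
        gcongr
      rw [div_mul_eq_mul_div, le_div_iff₀ (by positivity)]
      linarith
  have hR0 : 0 ≤ R := by
    rw [hR]
    apply Real.sSup_nonneg
    intro r hr
    rw [hA] at hr
    obtain ⟨a, _, rfl⟩ := hr
    apply Real.sInf_nonneg
    rintro s ⟨w, _, rfl⟩
    positivity
  intro k hk
  obtain ⟨k, rfl⟩ : ∃ j, k = j + 1 := ⟨k - 1, by omega⟩
  apply iSup_le
  intro v
  rw [EReal.coe_le_coe_iff]
  change σ (x (k + 1)) v ≤ _
  push_cast
  set C := 2 * ℓ / ((k : ℝ) + 1 + 1) ^ 2 with hC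
  have hCpos : 0 < C := by positivity
  have eC : 2 * ℓ * R / ((k : ℝ) + 1 + 1) ^ 2 = C * R := by rw [hC]; ring
  rw [eC]
  by_cases hv : ∀ i, F i v ≤ F i (x 0)
  · obtain ⟨a, haX, hav⟩ := hdom v (by rw [hΩ]; exact hv)
    have haΩ : a ∈ Ω := by
      rw [hΩ]
      exact fun i => (hav i).trans (hv i)
    have hmem : sInf {s | ∃ w : E n, (∀ i, F i w = F i a) ∧ s = ‖w - x 0‖ ^ 2} ≤ R := by
      rw [hR]
      apply le_csSup hbdd
      rw [hA]
      exact ⟨a, ⟨haX, haΩ⟩, rfl⟩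
    have hle : σ (x (k + 1)) v / C ≤
        sInf {s | ∃ w : E n, (∀ i, F i w = F i a) ∧ s = ‖w - x 0‖ ^ 2} := by
      refine le_csInf (Set.nonempty_of_mem (x := ‖a - x 0‖ ^ 2) ⟨a, fun _ => rfl, rfl⟩) ?_
      rintro s ⟨w, hw, rfl⟩
      rw [div_le_iff₀ hCpos, mul_comm]
      refine le_trans ?_ (hbound k w)
      apply le_ciInf
      intro i
      have h1 := hσle (x (k + 1)) v i
      have h2 := hav i
      have h3 := hw i
      linarith
    have := (div_le_iff₀ hCpos).1 (hle.trans hmem)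
    linarith
  · push Not at hv
    obtain ⟨i, hi⟩ := hv
    have h1 := hσle (x (k + 1)) v i
    have h2 := hmono' k i
    have h3 : 0 ≤ C * R := by positivity
    linarith
end

section
/- Let {x^k} be generated by the multiobjective MFISTA algorithm. Let X* denote the set of weakly Pareto optimal points of F and let Ω := { x ∈ ℝ^n : F_i(x) ≤ F_i(x^0) for all i }. Assume X* is nonempty, assume that for every x ∈ Ω there exists x* ∈ X* with F_i(x*) ≤ F_i(x) for all i, and assume R := sup_{F* ∈ F(X* ∩ Ω)} inf_{x : F(x) = F*} ‖x − x^0‖² < ∞. Then every accumulation point of the sequence {x^k} is weakly Pareto optimal. -/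
open scoped RealInnerProductSpace

section aux

variable {V : Type*} [NormedAddCommGroup V] [InnerProductSpace ℝ V]

lemma aux_comb (t : ℝ) (p q w : V) :
    ‖t • p + (1 - t) • q - w‖ ^ 2 =
      t * ‖p - w‖ ^ 2 + (1 - t) * ‖q - w‖ ^ 2 - t * (1 - t) * ‖p - q‖ ^ 2 := by
  have h1 : t • p + (1 - t) • q - w = t • (p - w) + (1 - t) • (q - w) := by module
  have h2 : p - q = (p - w) - (q - w) := by abel
  rw [h1, h2]
  generalize p - w = a
  generalize q - w = b
  rw [norm_add_sq_real, norm_sub_sq_real, norm_smul, norm_smul, inner_smul_left,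
    inner_smul_right, mul_pow, mul_pow, Real.norm_eq_abs, Real.norm_eq_abs, sq_abs, sq_abs]
  simp only [conj_trivial]
  ring

lemma aux_three (h : V → ℝ) (hc : ConvexOn ℝ Set.univ h) (ℓ : ℝ) (hℓ : 0 < ℓ) (y z : V)
    (hmin : ∀ w, h z + ℓ / 2 * ‖z - y‖ ^ 2 ≤ h w + ℓ / 2 * ‖w - y‖ ^ 2) (w : V) :
    h z + ℓ / 2 * ‖z - y‖ ^ 2 + ℓ / 2 * ‖w - z‖ ^ 2 ≤ h w + ℓ / 2 * ‖w - y‖ ^ 2 := by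
  have key : ∀ s : ℝ, 0 < s → s < 1 →
      h z + ℓ / 2 * ‖z - y‖ ^ 2 + ℓ / 2 * (1 - s) * ‖w - z‖ ^ 2 ≤ h w + ℓ / 2 * ‖w - y‖ ^ 2 := by
    intro s hs hs1
    have h1 := hmin (s • w + (1 - s) • z)
    have h2 := hc.2 (Set.mem_univ w) (Set.mem_univ z) hs.le (by linarith : 0 ≤ 1 - s) (by ring)
    rw [aux_comb] at h1
    simp only [smul_eq_mul] at h2
    have h3 : s * (h z + ℓ / 2 * ‖z - y‖ ^ 2 + ℓ / 2 * (1 - s) * ‖w - z‖ ^ 2) ≤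
        s * (h w + ℓ / 2 * ‖w - y‖ ^ 2) := by nlinarith
    exact le_of_mul_le_mul_left h3 hs
  have hlim : Filter.Tendsto (fun s : ℝ => h z + ℓ / 2 * ‖z - y‖ ^ 2 +
      ℓ / 2 * (1 - s) * ‖w - z‖ ^ 2) (nhdsWithin 0 (Set.Ioi 0))
      (nhds (h z + ℓ / 2 * ‖z - y‖ ^ 2 + ℓ / 2 * (1 - 0) * ‖w - z‖ ^ 2)) := by
    apply Filter.Tendsto.mono_left _ nhdsWithin_le_nhds
    apply Continuous.tendsto
      (f := fun s : ℝ => h z + ℓ / 2 * ‖z - y‖ ^ 2 + ℓ / 2 * (1 - s) * ‖w - z‖ ^ 2)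
    fun_prop
  have := le_of_tendsto hlim (b := h w + ℓ / 2 * ‖w - y‖ ^ 2) (by
    filter_upwards [Ioo_mem_nhdsGT (zero_lt_one' ℝ)] with s hs
    exact key s hs.1 hs.2)
  simpa using this

variable [CompleteSpace V]

lemma aux_line_s17 (f : V → ℝ) (hd : Differentiable ℝ f) (y v : V) (s : ℝ) :
    HasDerivAt (fun s : ℝ => f (y + s • v)) (inner ℝ (gradient f (y + s • v)) v) s := by
  have h1 := (hd (y + s • v)).hasGradientAt.hasFDerivAt
  have h2 : HasDerivAt (fun s : ℝ => y + s • v) v s := by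
    simpa using ((hasDerivAt_id s).smul_const v).const_add y
  have := h1.comp_hasDerivAt s h2
  exact this

lemma aux_descent_s17 (f : V → ℝ) (hd : Differentiable ℝ f) (L : ℝ)
    (hlip : ∀ a b, ‖gradient f a - gradient f b‖ ≤ L * ‖a - b‖) (y z : V) :
    f z ≤ f y + inner ℝ (gradient f y) (z - y) + L / 2 * ‖z - y‖ ^ 2 := by
  set v := z - y with hv
  let H : ℝ → ℝ := fun s => f (y + s • v) - s * inner ℝ (gradient f y) v - s ^ 2 * (L / 2 * ‖v‖ ^ 2)
  have hH : ∀ s, HasDerivAt H (inner ℝ (gradient f (y + s • v)) v - 1 * inner ℝ (gradient f y) v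
      - (2 * s) * (L / 2 * ‖v‖ ^ 2)) s := by
    intro s
    refine ((aux_line_s17 f hd y v s).sub ((hasDerivAt_id s).mul_const _)).sub ?_
    have := (hasDerivAt_pow 2 s).mul_const (L / 2 * ‖v‖ ^ 2)
    simpa using this
  have hanti : AntitoneOn H (Set.Icc 0 1) := by
    apply antitoneOn_of_deriv_nonpos (convex_Icc 0 1)
    · exact fun s _ => (hH s).continuousAt.continuousWithinAt
    · exact fun s _ => (hH s).differentiableAt.differentiableWithinAt
    · intro s hs
      rw [interior_Icc] at hs
      rw [(hH s).deriv, one_mul, ← inner_sub_left]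
      have h1 := real_inner_le_norm (gradient f (y + s • v) - gradient f y) v
      have h2 := hlip (y + s • v) y
      rw [add_sub_cancel_left, norm_smul, Real.norm_eq_abs, abs_of_pos hs.1] at h2
      have h3 := mul_le_mul_of_nonneg_right h2 (norm_nonneg v)
      nlinarith
  have := hanti (Set.left_mem_Icc.2 zero_le_one) (Set.right_mem_Icc.2 zero_le_one) zero_le_one
  have e : y + v = z := by rw [hv]; abel
  simp only [H, one_smul, zero_smul, e] at this
  generalize inner ℝ (gradient f y) v = G at *
  simp at this
  linarith

lemma aux_grad (f : V → ℝ) (hd : Differentiable ℝ f) (hc : ConvexOn ℝ Set.univ f) (y z : V) :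
    f y + inner ℝ (gradient f y) (z - y) ≤ f z := by
  have h1 : ConvexOn ℝ Set.univ (fun s : ℝ => f (y + s • (z - y))) := by
    have := hc.comp_affineMap (AffineMap.lineMap y z)
    have e : (fun s : ℝ => f (y + s • (z - y))) = f ∘ (AffineMap.lineMap y z : ℝ →ᵃ[ℝ] V) := by
      funext s
      simp [AffineMap.lineMap_apply, add_comm]
    rw [e]; simpa using this
  have h2 := h1.le_slope_of_hasDerivAt (Set.mem_univ 0) (Set.mem_univ 1) zero_lt_one
    (aux_line_s17 f hd y (z - y) 0)
  simp only [zero_smul, add_zero] at h2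
  generalize inner ℝ (gradient f y) (z - y) = G at *
  simp [slope] at h2
  linarith

end aux

lemma aux_key {V : Type*} [NormedAddCommGroup V] [InnerProductSpace ℝ V] [CompleteSpace V]
    (m : ℕ) (hm : 1 ≤ m) (f g F : Fin m → V → ℝ) (L : Fin m → ℝ)
    (hfc : ∀ i, ConvexOn ℝ Set.univ (f i))
    (hfd : ∀ i, Differentiable ℝ (f i))
    (hflip : ∀ i a b, ‖gradient (f i) a - gradient (f i) b‖ ≤ L i * ‖a - b‖)
    (hgc : ∀ i, ConvexOn ℝ Set.univ (g i))
    (hF : ∀ i w, F i w = f i w + g i w)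
    (ℓ : ℝ) (hℓ : 0 < ℓ) (hℓL : ∀ i, L i ≤ ℓ) (a b z : V)
    (hd : ∀ w,
      (⨆ i, (inner ℝ (gradient (f i) b) (z - b) + g i z + f i b - F i a)) +
          ℓ / 2 * ‖z - b‖ ^ 2 ≤
        (⨆ i, (inner ℝ (gradient (f i) b) (w - b) + g i w + f i b - F i a)) +
          ℓ / 2 * ‖w - b‖ ^ 2) (w : V) (c : ℝ) (hc : ∀ i, F i w - F i a ≤ c) (i : Fin m) :
    F i z - F i a ≤ c + ℓ / 2 * (‖w - b‖ ^ 2 - ‖w - z‖ ^ 2) := by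
  haveI : Nonempty (Fin m) := ⟨⟨0, hm⟩⟩
  have hbd : ∀ w, BddAbove (Set.range fun i =>
      (inner ℝ (gradient (f i) b) (w - b) + g i w + f i b - F i a)) :=
    fun w => (Set.finite_range _).bddAbove
  have hconv : ConvexOn ℝ Set.univ (fun w => ⨆ i,
      (inner ℝ (gradient (f i) b) (w - b) + g i w + f i b - F i a)) := by
    refine ⟨convex_univ, fun p _ q _ s r hs hr hsr => ?_⟩
    apply ciSup_le
    intro j
    have hp := le_ciSup (hbd p) j
    have hq := le_ciSup (hbd q) j
    have hg := (hgc j).2 (Set.mem_univ p) (Set.mem_univ q) hs hr hsr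
    have e : s • p + r • q - b = s • (p - b) + r • (q - b) := by
      have : b = (s + r) • b := by rw [hsr, one_smul]
      nth_rewrite 1 [this]
      module
    rw [e, inner_add_right, inner_smul_right, inner_smul_right]
    simp only [smul_eq_mul] at hg ⊢
    have h1 := mul_le_mul_of_nonneg_left hp hs
    have h2 := mul_le_mul_of_nonneg_left hq hr
    have e2 : f j b - F j a = s * (f j b - F j a) + r * (f j b - F j a) := by
      rw [← add_mul, hsr, one_mul]
    linarith
  have h3 := aux_three _ hconv ℓ hℓ b z hd w
  have h4 := le_ciSup (hbd z) i
  have h5 : (⨆ i, (inner ℝ (gradient (f i) b) (w - b) + g i w + f i b - F i a)) ≤ c := by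
    apply ciSup_le
    intro j
    have := aux_grad (f j) (hfd j) (hfc j) b w
    have := hc j
    have := hF j w
    linarith
  have h6 := aux_descent_s17 (f i) (hfd i) (L i) (hflip i) b z
  have h7 := hF i z
  have h8 : L i / 2 * ‖z - b‖ ^ 2 ≤ ℓ / 2 * ‖z - b‖ ^ 2 := by
    have := hℓL i
    gcongr
  linarith

theorem stmt_17
    (n m : ℕ) (hn : 1 ≤ n) (hm : 1 ≤ m)
    (f g F : Fin m → E n → ℝ)
    (L : Fin m → ℝ) (hL : ∀ i, 0 < L i)
    (hfc : ∀ i, ConvexOn ℝ Set.univ (f i))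
    (hfd : ∀ i, ContDiff ℝ 1 (f i))
    (hflip : ∀ i a b, ‖gradient (f i) a - gradient (f i) b‖ ≤ L i * ‖a - b‖)
    (hgc : ∀ i, ConvexOn ℝ Set.univ (g i))
    (hF : ∀ i w, F i w = f i w + g i w)
    (ℓ : ℝ) (hℓ : 0 < ℓ) (hℓL : ∀ i, L i ≤ ℓ)
    (d : E n → E n → E n)
    (hd : ∀ a b w,
      (⨆ i, (⟪gradient (f i) b, d a b - b⟫ + g i (d a b) + f i b - F i a)) +
          ℓ / 2 * ‖d a b - b‖ ^ 2 ≤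
        (⨆ i, (⟪gradient (f i) b, w - b⟫ + g i w + f i b - F i a)) +
          ℓ / 2 * ‖w - b‖ ^ 2)
    (x y z : ℕ → E n) (t : ℕ → ℝ)
    (hy1 : y 1 = x 0) (ht1 : t 1 = 1)
    (ht : ∀ k, 1 ≤ k → t (k + 1) = (1 + Real.sqrt (1 + 4 * t k ^ 2)) / 2)
    (hz : ∀ k, 1 ≤ k → z k = d (x (k - 1)) (y k))
    (hxpos : ∀ k, 1 ≤ k → 0 ≤ (⨆ i, (F i (x (k - 1)) - F i (z k))) → x k = z k)
    (hxneg : ∀ k, 1 ≤ k → ¬ 0 ≤ (⨆ i, (F i (x (k - 1)) - F i (z k))) → x k = x (k - 1))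
    (hy : ∀ k, 1 ≤ k →
      y (k + 1) = x k + (t k / t (k + 1)) • (z k - x k) +
        ((t k - 1) / t (k + 1)) • (x k - x (k - 1)))
    (Xstar : Set (E n)) (hX : Xstar = {a | ¬ ∃ w : E n, ∀ i, F i w < F i a})
    (Ω : Set (E n)) (hΩ : Ω = {w | ∀ i, F i w ≤ F i (x 0)})
    (hne : Xstar.Nonempty)
    (hdom : ∀ w ∈ Ω, ∃ a ∈ Xstar, ∀ i, F i a ≤ F i w)
    (A : Set ℝ)
    (hA : A = {r | ∃ a ∈ Xstar ∩ Ω,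
      r = sInf {s | ∃ w : E n, (∀ i, F i w = F i a) ∧ s = ‖w - x 0‖ ^ 2}})
    (hbdd : BddAbove A)
    (R : ℝ) (hR : R = sSup A) :
    ∀ a : E n, MapClusterPt a Filter.atTop x → ¬ ∃ w : E n, ∀ i, F i w < F i a := by
  intro a ha ⟨w, hw⟩
  haveI : Nonempty (Fin m) := ⟨⟨0, hm⟩⟩
  have hfd' : ∀ i, Differentiable ℝ (f i) := fun i => (hfd i).differentiable one_ne_zero
  have hFcont : ∀ i, Continuous (F i) := by
    intro i
    have : F i = fun w => f i w + g i w := funext (hF i)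
    rw [this]
    exact (hfd i).continuous.add (hgc i).locallyLipschitz.continuous
  -- the merit function
  let σ : E n → ℝ := fun p => ⨅ i, (F i p - F i w)
  have hbd : ∀ p : E n, BddBelow (Set.range fun i => F i p - F i w) :=
    fun p => (Set.finite_range _).bddBelow
  have hσle : ∀ p i, σ p ≤ F i p - F i w := fun p i => ciInf_le (hbd p) i
  have htpos : ∀ k : ℕ, ((k : ℝ) + 2) / 2 ≤ t (k + 1) := by
    intro k
    induction k with
    | zero => simp [ht1]
    | succ k ih =>
      rw [ht (k + 1) (by omega)]
      have h0 : 0 ≤ t (k + 1) := le_trans (by positivity) ih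
      have : 2 * t (k + 1) ≤ Real.sqrt (1 + 4 * t (k + 1) ^ 2) := by
        apply Real.le_sqrt_of_sq_le
        nlinarith
      push_cast
      linarith
  have htsq : ∀ k : ℕ, t (k + 2) ^ 2 - t (k + 2) = t (k + 1) ^ 2 := by
    intro k
    rw [ht (k + 1) (by omega)]
    have := Real.sq_sqrt (show 0 ≤ 1 + 4 * t (k + 1) ^ 2 by positivity)
    nlinarith
  have hkey : ∀ (k : ℕ) (v : E n) (c : ℝ), (∀ i, F i v - F i (x k) ≤ c) → ∀ i,
      F i (z (k + 1)) - F i (x k) ≤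
        c + ℓ / 2 * (‖v - y (k + 1)‖ ^ 2 - ‖v - z (k + 1)‖ ^ 2) := by
    intro k v c hc i
    have hzk := hz (k + 1) (by omega)
    rw [Nat.add_sub_cancel] at hzk
    refine aux_key m hm f g F L hfc hfd' hflip hgc hF ℓ hℓ hℓL (x k) (y (k + 1)) (z (k + 1))
      ?_ v c hc i
    rw [hzk]
    exact hd (x k) (y (k + 1))
  -- merit of z
  have h1 : ∀ k, σ (z (k + 1)) ≤ ℓ / 2 * (‖w - y (k + 1)‖ ^ 2 - ‖w - z (k + 1)‖ ^ 2) := by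
    intro k
    obtain ⟨i, hi⟩ := exists_eq_ciInf_of_finite (f := fun i => F i (x k) - F i w)
    have := hkey k w (-σ (x k)) (fun j => by have := hσle (x k) j; linarith) i
    have h2 := hσle (z (k + 1)) i
    have h3 : F i (x k) - F i w = σ (x k) := hi
    linarith
  have h2 : ∀ k, σ (z (k + 1)) - σ (x k) ≤
      ℓ / 2 * (‖x k - y (k + 1)‖ ^ 2 - ‖x k - z (k + 1)‖ ^ 2) := by
    intro k
    obtain ⟨i, hi⟩ := exists_eq_ciInf_of_finite (f := fun i => F i (x k) - F i w)
    have := hkey k (x k) 0 (fun j => by simp) i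
    have h2 := hσle (z (k + 1)) i
    have h3 : F i (x k) - F i w = σ (x k) := hi
    linarith
  have hxz : ∀ k, σ (x (k + 1)) ≤ σ (z (k + 1)) := by
    intro k
    have hp := hxpos (k + 1) (by omega)
    have hq := hxneg (k + 1) (by omega)
    rw [Nat.add_sub_cancel] at hp hq
    by_cases h : 0 ≤ ⨆ i, (F i (x k) - F i (z (k + 1)))
    · rw [hp h]
    · rw [hq h]
      apply ciInf_mono (hbd _)
      intro i
      have := le_ciSup (f := fun i => F i (x k) - F i (z (k + 1)))
        (Set.finite_range _).bddAbove i
      linarith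
  have main : ∀ k : ℕ, t (k + 1) ^ 2 * σ (x (k + 1)) +
      ℓ / 2 * ‖t (k + 1) • z (k + 1) + (1 - t (k + 1)) • x k - w‖ ^ 2 ≤
      ℓ / 2 * ‖w - x 0‖ ^ 2 := by
    intro k
    induction k with
    | zero =>
      have := h1 0
      have h3 := hxz 0
      simp only [zero_add, hy1, ht1] at this h3 ⊢
      rw [norm_sub_rev w (z 1)] at this
      simp only [one_smul, sub_self, zero_smul, add_zero]
      linarith
    | succ k ih =>
      refine le_trans ?_ ih
      have hT := htpos (k + 1)
      have hT1 : 1 ≤ t (k + 1 + 1) := by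
        refine le_trans ?_ hT
        push_cast
        have : (0 : ℝ) ≤ k := Nat.cast_nonneg k
        linarith
      have hy' : t (k + 1) • z (k + 1) + (1 - t (k + 1)) • x k - w =
          t (k + 1 + 1) • y (k + 1 + 1) + (1 - t (k + 1 + 1)) • x (k + 1) - w := by
        have hT0 : t (k + 1 + 1) ≠ 0 := by linarith
        rw [hy (k + 1) (by omega), smul_add, smul_add, smul_smul, smul_smul,
          mul_div_cancel₀ _ hT0, mul_div_cancel₀ _ hT0, Nat.add_sub_cancel]
        module
      have hs := htsq k
      rw [hy', aux_comb, aux_comb]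
      have e1 := h1 (k + 1)
      have e2 := h2 (k + 1)
      have e3 := hxz (k + 1)
      rw [norm_sub_rev w, norm_sub_rev w] at e1
      rw [norm_sub_rev (x (k + 1)), norm_sub_rev (x (k + 1))] at e2
      rw [← hs]
      change t (k + 1 + 1) ^ 2 * _ + _ ≤ (t (k + 1 + 1) ^ 2 - t (k + 1 + 1)) * _ + _
      generalize t (k + 1 + 1) = T at *
      have a1 := mul_le_mul_of_nonneg_left e1 (by linarith : 0 ≤ T)
      have a2 := mul_le_mul_of_nonneg_left e2 (mul_nonneg (by linarith : 0 ≤ T) (by linarith : 0 ≤ T - 1))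
      have a3 := mul_le_mul_of_nonneg_left e3 (sq_nonneg T)
      linarith
  -- conclude
  have hσa : ∃ ε > 0, ∀ i, ε < F i a - F i w := by
    obtain ⟨i, hi⟩ := exists_eq_ciInf_of_finite (f := fun i => F i a - F i w)
    refine ⟨(F i a - F i w) / 2, by have := hw i; linarith, fun j => ?_⟩
    have h3 : F i a - F i w = σ a := hi
    have := hσle a j
    have := hw i
    linarith
  obtain ⟨ε, hε, hεa⟩ := hσa
  have hev : ∀ᶠ p in nhds a, ∀ i, ε < F i p - F i w := by
    rw [Filter.eventually_all]
    intro i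
    exact ((hFcont i).sub continuous_const).continuousAt.eventually (lt_mem_nhds (hεa i))
  have hfr := ha.frequently hev
  obtain ⟨N, hN⟩ := exists_nat_gt (ℓ / 2 * ‖w - x 0‖ ^ 2 / ε)
  obtain ⟨k, hkN, hk⟩ := Filter.frequently_atTop.1 hfr (2 * N + 1)
  obtain ⟨j, rfl⟩ : ∃ j, k = j + 1 := ⟨k - 1, by omega⟩
  have hσε : ε ≤ σ (x (j + 1)) := le_ciInf fun i => (hk i).le
  have hm1 := main j
  have ht1' := htpos j
  have hjN : (2 * N : ℝ) ≤ j := by exact_mod_cast (by omega : 2 * N ≤ j)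
  have hN0 : (0 : ℝ) ≤ N := Nat.cast_nonneg N
  have hT : (N : ℝ) + 1 ≤ t (j + 1) := by linarith
  have hT2 : (N : ℝ) ≤ t (j + 1) ^ 2 := by nlinarith
  rw [div_lt_iff₀ hε] at hN
  have b1 : t (j + 1) ^ 2 * ε ≤ t (j + 1) ^ 2 * σ (x (j + 1)) :=
    mul_le_mul_of_nonneg_left hσε (sq_nonneg _)
  have b2 : (N : ℝ) * ε ≤ t (j + 1) ^ 2 * ε := mul_le_mul_of_nonneg_right hT2 hε.le
  have b3 : 0 ≤ ℓ / 2 * ‖t (j + 1) • z (j + 1) + (1 - t (j + 1)) • x j - w‖ ^ 2 := by positivity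
  linarith
end
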